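/- Let h : [0,T]×D → ℝ be bounded measurable, let p ≥ 1 and N ∈ ℕ. If (v_n) is a sequence in H_N converging weakly in L²([0,T]×D) to v, then for every t ∈ [0,T], the L^p(D)-norm of the function x ↦ ∫_0^t ∫_D G_{t−s}(x,y) h(s,y) (v_n(s,y) − v(s,y)) dy ds converges to 0 as n → ∞. -/

import Mathlib

open MeasureTheory Real Filter

noncomputable section

/-- The spatial domain `[0, π]^d`. -/
def Dom (d : ℕ) : Set (Fin d → ℝ) := Set.Icc 0 (fun _ => Real.pi)

/-- Normalizing constants of the Neumann cosine basis. -/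
def eps0 (j : ℕ) : ℝ := if j = 0 then Real.sqrt (1 / Real.pi) else Real.sqrt (2 / Real.pi)

/-- Neumann eigenfunctions of `-Δ` on `[0, π]^d`. -/
def phi {d : ℕ} (k : Fin d → ℕ) (x : Fin d → ℝ) : ℝ :=
  ∏ i, eps0 (k i) * Real.cos ((k i : ℝ) * x i)

/-- `|k|² = Σ kᵢ²`. -/
def ksq {d : ℕ} (k : Fin d → ℕ) : ℝ := ∑ i, (k i : ℝ) ^ 2

/-- Green function of `∂ₜ + Δ²` with Neumann boundary conditions on `[0, π]^d`. -/
def green {d : ℕ} (t : ℝ) (x y : Fin d → ℝ) : ℝ :=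
  ∑' k : Fin d → ℕ, Real.exp (-(ksq k ^ 2) * t) * phi k x * phi k y

/-- Laplacian in the `x`-variable of the Green function. -/
def greenLap {d : ℕ} (t : ℝ) (x y : Fin d → ℝ) : ℝ :=
  -∑' k : Fin d → ℕ, ksq k * Real.exp (-(ksq k ^ 2) * t) * phi k x * phi k y

/-- The `L^p([0,π]^d)`-norm (real exponent `p`). -/
def LpNorm {d : ℕ} (p : ℝ) (u : (Fin d → ℝ) → ℝ) : ℝ :=
  (∫ x in Dom d, |u x| ^ p) ^ (1 / p)

/-- `v ∈ L²([0,T] × D)`. -/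
def MemL2TD {d : ℕ} (T : ℝ) (v : ℝ → (Fin d → ℝ) → ℝ) : Prop :=
  Measurable (Function.uncurry v) ∧
  MeasureTheory.IntegrableOn (fun q : ℝ × (Fin d → ℝ) => (v q.1 q.2) ^ 2)
    (Set.Icc 0 T ×ˢ Dom d)

/-- `v ∈ H_N = {v ∈ L²([0,T]×D) : ∫_0^T ∫_D v² ≤ N}`. -/
def MemHN {d : ℕ} (T : ℝ) (N : ℕ) (v : ℝ → (Fin d → ℝ) → ℝ) : Prop :=
  MemL2TD T v ∧ (∫ t in Set.Icc (0 : ℝ) T, ∫ x in Dom d, (v t x) ^ 2) ≤ (N : ℝ)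

/-- `Z` solves the skeleton equation (2.10) with coefficients `b = f′(u⁰)`, `g = σ(u⁰)` and
control `v`, with `sup_{t ∈ [0,T]} ‖Z(t,·)‖_p < ∞`. -/
def SolvesSkeleton {d : ℕ} (T p : ℝ) (b g v Z : ℝ → (Fin d → ℝ) → ℝ) : Prop :=
  Measurable (Function.uncurry Z) ∧
  (∃ M : ℝ, ∀ t ∈ Set.Icc (0 : ℝ) T, LpNorm p (Z t) ≤ M) ∧
  ∀ t ∈ Set.Icc (0 : ℝ) T, ∀ x ∈ Dom d,
    Z t x = (∫ s in (0 : ℝ)..t, ∫ y in Dom d, green (t - s) x y * g s y * v s y) +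
      ∫ s in (0 : ℝ)..t, ∫ y in Dom d, greenLap (t - s) x y * b s y * Z s y

/-!
Expanding the Green kernel in the orthogonal modes `exp (-|k|⁴ (t - s)) φ_k(x) φ_k(y)` of
`L²([0,T] × D)`, the squared norm of the `k`-th mode is at most a constant times `(1 + |k|²)⁻²`,
uniformly in `x`, and the sum of these over `k ∈ ℕ^d` is finite exactly because `d < 4`. So
`G_{t-·}(x,·) h` is a test function whose `L²` norm is bounded in `x`: weak convergence makes the
convolutions tend to zero pointwise in `x`, while Cauchy-Schwarz and the boundedness of weakly
convergent sequences bound them uniformly. Dominated convergence on the bounded domain `D` finishes.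
-/

section L2

variable {Ω : Type*} [MeasurableSpace Ω] {μ : Measure Ω}

theorem inner_toLp_eq_integral_mul {f g : Ω → ℝ} (hf : MemLp f 2 μ) (hg : MemLp g 2 μ) :
    inner ℝ (hf.toLp f) (hg.toLp g) = ∫ z, f z * g z ∂μ := by
  rw [L2.inner_def]
  refine integral_congr_ae ?_
  filter_upwards [hf.coeFn_toLp, hg.coeFn_toLp] with z hfz hgz
  rw [hfz, hgz, Real.inner_apply]

theorem abs_integral_mul_le_eLpNorm_mul_eLpNorm {f g : Ω → ℝ} (hf : MemLp f 2 μ)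
    (hg : MemLp g 2 μ) :
    |∫ z, f z * g z ∂μ| ≤ (eLpNorm f 2 μ).toReal * (eLpNorm g 2 μ).toReal := by
  rw [← inner_toLp_eq_integral_mul hf hg, ← Lp.norm_toLp f hf, ← Lp.norm_toLp g hg]
  exact abs_real_inner_le_norm _ _

theorem exists_eLpNorm_le_of_forall_exists_abs_integral_mul_le {ι : Type*} {w : ι → Ω → ℝ}
    (hw : ∀ i, MemLp (w i) 2 μ)
    (hbdd : ∀ φ : Ω → ℝ, MemLp φ 2 μ → ∃ C, ∀ i, |∫ z, w i z * φ z ∂μ| ≤ C) :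
    ∃ C, ∀ i, (eLpNorm (w i) 2 μ).toReal ≤ C := by
  have hinner : ∀ φ : Lp ℝ 2 μ, ∃ C, ∀ i, ‖innerSL ℝ ((hw i).toLp (w i)) φ‖ ≤ C := fun φ => by
    obtain ⟨C, hC⟩ := hbdd φ (Lp.memLp φ)
    refine ⟨C, fun i => ?_⟩
    rw [innerSL_apply_apply, ← Lp.toLp_coeFn φ (Lp.memLp φ), inner_toLp_eq_integral_mul]
    exact hC i
  obtain ⟨C, hC⟩ := banach_steinhaus hinner
  refine ⟨C, fun i => ?_⟩
  simpa only [innerSL_apply_norm, Lp.norm_toLp] using hC i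

theorem eLpNorm_two_le_of_integral_sq_le {f : Ω → ℝ} {C : ℝ} (hf : MemLp f 2 μ)
    (hC : ∫ z, f z ^ 2 ∂μ ≤ C) : eLpNorm f 2 μ ≤ ENNReal.ofReal √C := by
  rw [hf.eLpNorm_eq_integral_rpow_norm two_ne_zero ENNReal.ofNat_ne_top]
  refine ENNReal.ofReal_le_ofReal ?_
  simpa [Real.sqrt_eq_rpow] using Real.sqrt_le_sqrt hC

theorem integral_sum_sq_of_orthogonal {ι : Type*} {f : ι → Ω → ℝ} (hf : ∀ i, MemLp (f i) 2 μ)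
    (horth : ∀ i j, i ≠ j → ∫ z, f i z * f j z ∂μ = 0) (s : Finset ι) :
    ∫ z, (∑ i ∈ s, f i z) ^ 2 ∂μ = ∑ i ∈ s, ∫ z, f i z ^ 2 ∂μ := by
  have hint : ∀ i j, Integrable (fun z => f i z * f j z) μ := fun i j =>
    (hf i).integrable_mul (hf j)
  simp_rw [sq, Finset.sum_mul_sum]
  rw [integral_finsetSum _ fun i _ => integrable_finsetSum _ fun j _ => hint i j]
  refine Finset.sum_congr rfl fun i hi => ?_
  rw [integral_finsetSum _ fun j _ => hint i j]
  exact Finset.sum_eq_single_of_mem i hi fun j _ hji => horth i j hji.symm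

theorem eLpNorm_le_of_hasSum_of_orthogonal {ι : Type*} [Countable ι] {f : ι → Ω → ℝ}
    {g : Ω → ℝ} {C : ℝ} (hf : ∀ i, MemLp (f i) 2 μ)
    (horth : ∀ i j, i ≠ j → ∫ z, f i z * f j z ∂μ = 0)
    (hC : ∀ s : Finset ι, ∑ i ∈ s, ∫ z, f i z ^ 2 ∂μ ≤ C)
    (hsum : ∀ᵐ z ∂μ, HasSum (fun i => f i z) (g z)) :
    eLpNorm g 2 μ ≤ ENNReal.ofReal √C := by
  have hpartial : ∀ s : Finset ι, MemLp (fun z => ∑ i ∈ s, f i z) 2 μ := fun s =>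
    memLp_finsetSum s fun i _ => hf i
  refine Lp.eLpNorm_le_of_ae_tendsto (u := atTop) (f := fun s z => ∑ i ∈ s, f i z)
    (Eventually.of_forall fun s => eLpNorm_two_le_of_integral_sq_le (hpartial s) ?_)
    (fun s => (hpartial s).1) hsum
  rw [integral_sum_sq_of_orthogonal hf horth]
  exact hC s

theorem tendsto_integral_abs_rpow_zero [IsFiniteMeasure μ] {p : ℝ} (hp : 0 < p)
    {u : ℕ → Ω → ℝ} {M : ℝ} (hu : ∀ n, AEStronglyMeasurable (u n) μ)
    (hbdd : ∀ n z, |u n z| ≤ M) (hlim : ∀ z, Tendsto (fun n => u n z) atTop (nhds 0)) :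
    Tendsto (fun n => ∫ z, |u n z| ^ p ∂μ) atTop (nhds 0) := by
  have hpow : ∀ z, Tendsto (fun n => |u n z| ^ p) atTop (nhds 0) := fun z => by
    simpa [Real.zero_rpow hp.ne'] using (hlim z).abs.rpow_const (p := p) (Or.inr hp.le)
  simpa using tendsto_integral_of_dominated_convergence (fun _ => M ^ p)
    (fun n => ((hu n).norm.aemeasurable.pow_const p).aestronglyMeasurable) (integrable_const _)
    (fun n => Eventually.of_forall fun z => by
      rw [Real.norm_of_nonneg (by positivity)]
      exact Real.rpow_le_rpow (abs_nonneg _) (hbdd n z) hp.le)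
    (Eventually.of_forall hpow)

theorem tendsto_integral_abs_integral_mul_rpow_zero [SFinite μ] {X : Type*} [MeasurableSpace X]
    {ν : Measure X} [IsFiniteMeasure ν] {p : ℝ} (hp : 0 < p) {K : X → Ω → ℝ}
    (hK : Measurable (Function.uncurry K)) {C : ℝ}
    (hKC : ∀ x, eLpNorm (K x) 2 μ ≤ ENNReal.ofReal C) {w : ℕ → Ω → ℝ}
    (hw : ∀ n, MemLp (w n) 2 μ)
    (hweak : ∀ φ : Ω → ℝ, MemLp φ 2 μ →
      Tendsto (fun n => ∫ z, w n z * φ z ∂μ) atTop (nhds 0)) :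
    Tendsto (fun n => ∫ x, |∫ z, w n z * K x z ∂μ| ^ p ∂ν) atTop (nhds 0) := by
  have hK2 : ∀ x, MemLp (K x) 2 μ := fun x =>
    ⟨hK.of_uncurry_left.aestronglyMeasurable, (hKC x).trans_lt ENNReal.ofReal_lt_top⟩
  obtain ⟨B, hB⟩ := exists_eLpNorm_le_of_forall_exists_abs_integral_mul_le hw fun φ hφ => by
    obtain ⟨A, hA⟩ := (Metric.isBounded_range_of_tendsto _ (hweak φ hφ)).exists_norm_le
    exact ⟨A, fun n => hA _ ⟨n, rfl⟩⟩
  refine tendsto_integral_abs_rpow_zero hp (M := B * (ENNReal.ofReal C).toReal) (fun n => ?_)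
    (fun n x => ?_) fun x => hweak _ (hK2 x)
  · exact ((hw n).1.comp_snd.mul hK.aestronglyMeasurable).integral_prod_right'
  · calc |∫ z, w n z * K x z ∂μ|
        ≤ (eLpNorm (w n) 2 μ).toReal * (eLpNorm (K x) 2 μ).toReal :=
          abs_integral_mul_le_eLpNorm_mul_eLpNorm (hw n) (hK2 x)
      _ ≤ B * (ENNReal.ofReal C).toReal :=
          mul_le_mul (hB n) (ENNReal.toReal_mono ENNReal.ofReal_ne_top (hKC x))
            ENNReal.toReal_nonneg (ENNReal.toReal_nonneg.trans (hB n))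

end L2

section Summability

theorem summable_prod_apply {ι κ : Type*} [Fintype ι] {f : ι → κ → ℝ}
    (hf : ∀ i, Summable (f i)) (hf0 : ∀ i n, 0 ≤ f i n) :
    Summable fun k : ι → κ => ∏ i, f i (k i) := by
  classical
  refine summable_of_sum_le (c := ∏ i, ∑' n, f i n)
    (fun k => Finset.prod_nonneg fun i _ => hf0 i _) fun s => ?_
  let A : ι → Finset κ := fun i => s.image fun k => k i
  have hsA : s ⊆ Fintype.piFinset A := fun k hk =>
    Fintype.mem_piFinset.2 fun i => Finset.mem_image_of_mem (fun k => k i) hk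
  calc ∑ k ∈ s, ∏ i, f i (k i) ≤ ∑ k ∈ Fintype.piFinset A, ∏ i, f i (k i) :=
        Finset.sum_le_sum_of_subset_of_nonneg hsA
          fun k _ _ => Finset.prod_nonneg fun i _ => hf0 i _
    _ = ∏ i, ∑ n ∈ A i, f i n := (Finset.prod_univ_sum A f).symm
    _ ≤ ∏ i, ∑' n, f i n :=
        Finset.prod_le_prod (fun i _ => Finset.sum_nonneg fun n _ => hf0 i n)
          fun i _ => (hf i).sum_le_tsum _ fun n _ => hf0 i n

theorem summable_one_add_sq_rpow_neg {r : ℝ} (hr : 1 / 2 < r) :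
    Summable fun n : ℕ => (1 + (n : ℝ) ^ 2) ^ (-r) := by
  rw [← summable_nat_add_iff 1]
  have hpow : Summable fun n : ℕ => ((n + 1 : ℕ) : ℝ) ^ (2 * -r) :=
    (summable_nat_add_iff 1).2 (Real.summable_nat_rpow.2 (by linarith))
  refine hpow.of_nonneg_of_le (fun n => by positivity) fun n => ?_
  rw [Real.rpow_mul (by positivity), Real.rpow_two]
  exact Real.rpow_le_rpow_of_nonpos (by positivity) (by linarith) (by linarith)

variable {d : ℕ}

theorem ksq_nonneg (k : Fin d → ℕ) : 0 ≤ ksq k :=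
  Finset.sum_nonneg fun _ _ => sq_nonneg _

theorem sq_le_ksq (k : Fin d → ℕ) (i : Fin d) : (k i : ℝ) ^ 2 ≤ ksq k :=
  Finset.single_le_sum (f := fun i => (k i : ℝ) ^ 2) (fun _ _ => sq_nonneg _) (Finset.mem_univ i)

theorem sum_le_ksq_sq (k : Fin d → ℕ) : ∑ i, (k i : ℝ) ≤ ksq k ^ 2 := by
  have hnat : ∑ i, k i ≤ (∑ i, k i ^ 2) ^ 2 :=
    (Finset.sum_le_sum fun i _ => Nat.le_self_pow two_ne_zero (k i)).trans
      (Nat.le_self_pow two_ne_zero _)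
  rw [ksq]
  exact_mod_cast hnat

theorem summable_one_add_ksq_rpow_neg {r : ℝ} (hr : (d : ℝ) / 2 < r) :
    Summable fun k : Fin d → ℕ => (1 + ksq k) ^ (-r) := by
  rcases Nat.eq_zero_or_pos d with rfl | hd
  · exact (hasSum_fintype _).summable
  have hd' : (0 : ℝ) < d := Nat.cast_pos.2 hd
  have hexp : 1 / 2 < r / d := by
    rw [lt_div_iff₀ hd']
    linarith
  refine (summable_prod_apply (fun _ : Fin d => summable_one_add_sq_rpow_neg hexp)
    fun _ n => by positivity).of_nonneg_of_le
      (fun k => Real.rpow_nonneg (add_nonneg zero_le_one (ksq_nonneg k)) _) fun k => ?_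
  have hk : 0 < 1 + ksq k := by linarith [ksq_nonneg k]
  calc (1 + ksq k) ^ (-r) = ∏ _i : Fin d, (1 + ksq k) ^ (-(r / d)) := by
        rw [Finset.prod_const, Finset.card_univ, Fintype.card_fin, ← Real.rpow_mul_natCast hk.le,
          neg_mul, div_mul_cancel₀ _ hd'.ne']
    _ ≤ ∏ i, (1 + (k i : ℝ) ^ 2) ^ (-(r / d)) :=
        Finset.prod_le_prod (fun _ _ => by positivity) fun i _ =>
          Real.rpow_le_rpow_of_nonpos (by positivity) (by linarith [sq_le_ksq k i])
            (by linarith)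

theorem summable_exp_neg_ksq_sq_mul {τ : ℝ} (hτ : 0 < τ) :
    Summable fun k : Fin d → ℕ => Real.exp (-(ksq k ^ 2) * τ) := by
  refine (summable_prod_apply (fun _ : Fin d => Real.summable_exp_nat_mul_iff.2 (neg_lt_zero.2 hτ))
    fun _ _ => (Real.exp_pos _).le).of_nonneg_of_le (fun k => (Real.exp_pos _).le) fun k => ?_
  rw [← Real.exp_sum, ← Finset.sum_mul]
  refine Real.exp_le_exp.2 ?_
  nlinarith [mul_le_mul_of_nonneg_right (sum_le_ksq_sq k) hτ.le]

end Summability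

section Eigenfunctions

theorem abs_eps0_le_one (j : ℕ) : |eps0 j| ≤ 1 := by
  have hpi := Real.two_le_pi
  rw [eps0, apply_ite abs, abs_of_nonneg (Real.sqrt_nonneg _), abs_of_nonneg (Real.sqrt_nonneg _)]
  split_ifs <;> exact Real.sqrt_le_one.2 ((div_le_one Real.pi_pos).2 (by linarith))

theorem integral_cos_intCast_mul {m : ℤ} (hm : m ≠ 0) :
    ∫ x in (0 : ℝ)..π, Real.cos (m * x) = 0 := by
  rw [intervalIntegral.integral_comp_mul_left (fun x => Real.cos x) (Int.cast_ne_zero.2 hm),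
    integral_cos]
  simp [Real.sin_int_mul_pi]

theorem integral_cos_mul_cos_of_ne {j k : ℕ} (hjk : j ≠ k) :
    ∫ x in Set.Icc (0 : ℝ) π, Real.cos (j * x) * Real.cos (k * x) = 0 := by
  have hproduct : ∀ x : ℝ, Real.cos (j * x) * Real.cos (k * x) =
      (Real.cos (((j - k : ℤ) : ℝ) * x) + Real.cos (((j + k : ℤ) : ℝ) * x)) / 2 := fun x => by
    push_cast
    rw [sub_mul, add_mul, Real.cos_sub, Real.cos_add]
    ring
  rw [integral_Icc_eq_integral_Ioc, ← intervalIntegral.integral_of_le Real.pi_pos.le]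
  simp_rw [hproduct]
  rw [intervalIntegral.integral_div, intervalIntegral.integral_add
    (Continuous.intervalIntegrable (by fun_prop) _ _)
    (Continuous.intervalIntegrable (by fun_prop) _ _),
    integral_cos_intCast_mul (by omega), integral_cos_intCast_mul (by omega), add_zero, zero_div]

variable {d : ℕ}

theorem abs_phi_le_one (k : Fin d → ℕ) (x : Fin d → ℝ) : |phi k x| ≤ 1 := by
  rw [phi, Finset.abs_prod]
  refine Finset.prod_le_one (fun i _ => abs_nonneg _) fun i _ => ?_
  rw [abs_mul]
  exact mul_le_one₀ (abs_eps0_le_one _) (abs_nonneg _) (Real.abs_cos_le_one _)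

theorem continuous_phi (k : Fin d → ℕ) : Continuous (phi k) := by
  unfold phi
  fun_prop

theorem volume_restrict_Dom (d : ℕ) :
    (volume : Measure (Fin d → ℝ)).restrict (Dom d) =
      Measure.pi fun _ => volume.restrict (Set.Icc (0 : ℝ) π) := by
  rw [Dom, ← Set.pi_univ_Icc, volume_pi, Measure.restrict_pi_pi]
  rfl

instance isFiniteMeasure_restrict_Dom (d : ℕ) :
    IsFiniteMeasure ((volume : Measure (Fin d → ℝ)).restrict (Dom d)) := by
  rw [volume_restrict_Dom]
  infer_instance

theorem integral_phi_mul_phi_of_ne {k l : Fin d → ℕ} (hkl : k ≠ l) :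
    ∫ y in Dom d, phi k y * phi l y = 0 := by
  obtain ⟨i, hi⟩ := Function.ne_iff.1 hkl
  rw [volume_restrict_Dom]
  simp_rw [phi, ← Finset.prod_mul_distrib, mul_mul_mul_comm (eps0 _)]
  rw [integral_fintype_prod_eq_prod
    (fun i z => eps0 (k i) * eps0 (l i) * (Real.cos (k i * z) * Real.cos (l i * z)))]
  refine Finset.prod_eq_zero (Finset.mem_univ i) ?_
  rw [integral_const_mul, integral_cos_mul_cos_of_ne hi, mul_zero]

theorem integral_phi_sq_le (k : Fin d → ℕ) : ∫ y in Dom d, phi k y ^ 2 ≤ volume.real (Dom d) := by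
  have hle : ∀ y, ‖phi k y ^ 2‖ ≤ 1 := fun y => by
    rw [norm_pow]
    exact pow_le_one₀ (norm_nonneg _) (abs_phi_le_one k y)
  simpa using (le_abs_self _).trans (norm_integral_le_of_norm_le_const
    (μ := volume.restrict (Dom d)) (Eventually.of_forall hle))

end Eigenfunctions

section GreenKernel

variable {d : ℕ}

/-- The time factor `exp (-|k|⁴ (t - s))` of the `k`-th mode of `G_{t-s}`, extended by `0` to
`s ≥ t` so that the integrals over `[0,t]` become integrals over the fixed interval `[0,T]`. -/
def modeDecay (t : ℝ) (k : Fin d → ℕ) (s : ℝ) : ℝ :=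
  (Set.Iio t).indicator (fun s => Real.exp (-(ksq k ^ 2) * (t - s))) s

/-- The `k`-th term of the eigenfunction expansion of `(s, y) ↦ G_{t-s}(x,y)`, extended by `0` to
`s ≥ t`. -/
def greenMode (t : ℝ) (x : Fin d → ℝ) (k : Fin d → ℕ) (z : ℝ × (Fin d → ℝ)) : ℝ :=
  modeDecay t k z.1 * phi k x * phi k z.2

/-- The kernel `(s, y) ↦ G_{t-s}(x,y)`, extended by `0` to `s ≥ t`. -/
def causalGreen (t : ℝ) (x : Fin d → ℝ) (z : ℝ × (Fin d → ℝ)) : ℝ :=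
  (Set.Iio t).indicator (fun s => green (t - s) x z.2) z.1

/-- Lebesgue measure on the space-time domain `[0,T] × [0,π]^d`. -/
abbrev spaceTime (d : ℕ) (T : ℝ) : Measure (ℝ × (Fin d → ℝ)) :=
  (volume.restrict (Set.Icc 0 T)).prod (volume.restrict (Dom d))

theorem measurable_modeDecay (t : ℝ) (k : Fin d → ℕ) : Measurable (modeDecay t k) :=
  Measurable.indicator (by fun_prop) measurableSet_Iio

theorem modeDecay_nonneg (t : ℝ) (k : Fin d → ℕ) (s : ℝ) : 0 ≤ modeDecay t k s :=
  Set.indicator_nonneg (fun _ _ => (Real.exp_pos _).le) s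

theorem modeDecay_le_one (t : ℝ) (k : Fin d → ℕ) (s : ℝ) : modeDecay t k s ≤ 1 :=
  Set.indicator_le' (fun s hs => Real.exp_le_one_iff.2 (by
    nlinarith [sq_nonneg (ksq k), Set.mem_Iio.1 hs])) (fun _ _ => zero_le_one) s

theorem measurable_greenMode (t : ℝ) (k : Fin d → ℕ) :
    Measurable fun q : (Fin d → ℝ) × ℝ × (Fin d → ℝ) => greenMode t q.1 k q.2 :=
  (((measurable_modeDecay t k).comp measurable_snd.fst).mul
    ((continuous_phi k).measurable.comp measurable_fst)).mul
    ((continuous_phi k).measurable.comp measurable_snd.snd)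

theorem abs_greenMode_le_modeDecay (t : ℝ) (x : Fin d → ℝ) (k : Fin d → ℕ)
    (z : ℝ × (Fin d → ℝ)) : |greenMode t x k z| ≤ modeDecay t k z.1 := by
  rw [greenMode, mul_assoc, abs_mul, abs_mul, abs_of_nonneg (modeDecay_nonneg t k z.1)]
  exact mul_le_of_le_one_right (modeDecay_nonneg t k z.1)
    (mul_le_one₀ (abs_phi_le_one k x) (abs_nonneg _) (abs_phi_le_one k z.2))

theorem memLp_greenMode (t T : ℝ) (x : Fin d → ℝ) (k : Fin d → ℕ) :
    MemLp (greenMode t x k) 2 (spaceTime d T) :=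
  MemLp.of_bound ((measurable_greenMode t k).comp measurable_prodMk_left).aestronglyMeasurable 1
    (Eventually.of_forall fun z =>
      (abs_greenMode_le_modeDecay t x k z).trans (modeDecay_le_one t k z.1))

theorem summable_modeDecay (t s : ℝ) : Summable fun k : Fin d → ℕ => modeDecay t k s := by
  by_cases hs : s < t
  · simpa [modeDecay, hs] using summable_exp_neg_ksq_sq_mul (sub_pos.2 hs)
  · simp [modeDecay, hs]

theorem hasSum_greenMode (t : ℝ) (x : Fin d → ℝ) (z : ℝ × (Fin d → ℝ)) :
    HasSum (fun k => greenMode t x k z) (causalGreen t x z) := by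
  have hsum : Summable fun k => greenMode t x k z :=
    (summable_modeDecay t z.1).of_norm_bounded fun k => abs_greenMode_le_modeDecay t x k z
  convert hsum.hasSum using 1
  by_cases hs : z.1 < t <;> simp [causalGreen, greenMode, modeDecay, green, hs]

theorem measurable_causalGreen (t : ℝ) :
    Measurable fun q : (Fin d → ℝ) × ℝ × (Fin d → ℝ) => causalGreen t q.1 q.2 :=
  measurable_of_tendsto_metrizable' (atTop : Filter (Finset (Fin d → ℕ)))
    (fun s => Finset.measurable_fun_sum s fun k _ => measurable_greenMode t k)
    (tendsto_pi_nhds.2 fun q => hasSum_greenMode t q.1 q.2)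

theorem setIntegral_Icc_indicator_Iio {t T : ℝ} (ht : t ∈ Set.Icc 0 T) (f : ℝ → ℝ) :
    ∫ s in Set.Icc 0 T, (Set.Iio t).indicator f s = ∫ s in (0 : ℝ)..t, f s := by
  have hset : Set.Icc 0 T ∩ Set.Iio t = Set.Ico 0 t := by
    ext s
    simp only [Set.mem_inter_iff, Set.mem_Icc, Set.mem_Iio, Set.mem_Ico]
    exact ⟨fun hs => ⟨hs.1.1, hs.2⟩, fun hs => ⟨⟨hs.1, hs.2.le.trans ht.2⟩, hs.2⟩⟩
  rw [setIntegral_indicator measurableSet_Iio, hset, integral_Ico_eq_integral_Ioc,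
    ← intervalIntegral.integral_of_le ht.1]

theorem mul_integral_exp_neg_mul_sub (c t : ℝ) :
    c * ∫ s in (0 : ℝ)..t, Real.exp (-c * (t - s)) = 1 - Real.exp (-c * t) := by
  have hderiv : ∀ s ∈ Set.uIcc 0 t,
      HasDerivAt (fun s => Real.exp (-c * (t - s))) (c * Real.exp (-c * (t - s))) s := fun s _ => by
    convert (((hasDerivAt_id' s).const_sub t).const_mul (-c)).exp using 1
    ring
  rw [← intervalIntegral.integral_const_mul, intervalIntegral.integral_eq_sub_of_hasDerivAt hderiv
    (Continuous.intervalIntegrable (by fun_prop) _ _)]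
  simp

theorem integral_modeDecay_sq_le {t T : ℝ} (ht : t ∈ Set.Icc 0 T) (k : Fin d → ℕ) :
    ∫ s in Set.Icc 0 T, modeDecay t k s ^ 2 ≤ (2 * T + 1) * (1 + ksq k) ^ (-2 : ℝ) := by
  have hT : 0 ≤ T := ht.1.trans ht.2
  set I := ∫ s in Set.Icc 0 T, modeDecay t k s ^ 2 with hI
  have hshort : I ≤ T := by
    have hle : ∀ s, ‖modeDecay t k s ^ 2‖ ≤ 1 := fun s => by
      rw [norm_pow, Real.norm_of_nonneg (modeDecay_nonneg t k s)]
      exact pow_le_one₀ (modeDecay_nonneg t k s) (modeDecay_le_one t k s)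
    simpa [hT] using (le_abs_self I).trans (norm_integral_le_of_norm_le_const
      (μ := volume.restrict (Set.Icc 0 T)) (Eventually.of_forall hle))
  have hlong : 2 * ksq k ^ 2 * I ≤ 1 := by
    have hsq : ∀ s, modeDecay t k s ^ 2 =
        (Set.Iio t).indicator (fun s => Real.exp (-(2 * ksq k ^ 2) * (t - s))) s := fun s => by
      by_cases hs : s < t
      · simp only [modeDecay, Set.indicator, Set.mem_Iio, hs, if_true, ← Real.exp_nat_mul]
        ring_nf
      · simp [modeDecay, hs]
    simp_rw [hI, hsq]
    rw [setIntegral_Icc_indicator_Iio ht, mul_integral_exp_neg_mul_sub]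
    exact sub_le_self _ (Real.exp_pos _).le
  have hI0 : 0 ≤ I := integral_nonneg fun s => sq_nonneg _
  have hq : 0 < 1 + ksq k := by linarith [ksq_nonneg k]
  rw [Real.rpow_neg hq.le, Real.rpow_two, ← div_eq_mul_inv, le_div_iff₀ (by positivity)]
  calc I * (1 + ksq k) ^ 2 ≤ I * (2 * (1 ^ 2 + ksq k ^ 2)) :=
        mul_le_mul_of_nonneg_left add_sq_le hI0
    _ ≤ 2 * T + 1 := by linarith

theorem integral_greenMode_mul_greenMode (t T : ℝ) (x : Fin d → ℝ) (k l : Fin d → ℕ) :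
    ∫ z, greenMode t x k z * greenMode t x l z ∂spaceTime d T =
      phi k x * phi l x * ((∫ s in Set.Icc 0 T, modeDecay t k s * modeDecay t l s) *
        ∫ y in Dom d, phi k y * phi l y) := by
  rw [← integral_prod_mul, ← integral_const_mul]
  refine integral_congr_ae (Eventually.of_forall fun z => ?_)
  simp only [greenMode]
  ring

theorem integral_greenMode_sq_le {t T : ℝ} (ht : t ∈ Set.Icc 0 T) (x : Fin d → ℝ)
    (k : Fin d → ℕ) :
    ∫ z, greenMode t x k z ^ 2 ∂spaceTime d T ≤
      (2 * T + 1) * volume.real (Dom d) * (1 + ksq k) ^ (-2 : ℝ) := by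
  have hphi : phi k x ^ 2 ≤ 1 := (sq_le_one_iff_abs_le_one _).2 (abs_phi_le_one k x)
  have htime := integral_modeDecay_sq_le ht k
  have htime0 : 0 ≤ ∫ s in Set.Icc 0 T, modeDecay t k s ^ 2 :=
    integral_nonneg fun _ => sq_nonneg _
  have hspace0 : 0 ≤ ∫ y in Dom d, phi k y ^ 2 := integral_nonneg fun _ => sq_nonneg _
  have hfactor := integral_greenMode_mul_greenMode t T x k k
  simp only [← sq] at hfactor
  calc ∫ z, greenMode t x k z ^ 2 ∂spaceTime d T
      ≤ (∫ s in Set.Icc 0 T, modeDecay t k s ^ 2) * ∫ y in Dom d, phi k y ^ 2 :=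
        hfactor.trans_le (mul_le_of_le_one_left (mul_nonneg htime0 hspace0) hphi)
    _ ≤ (2 * T + 1) * (1 + ksq k) ^ (-2 : ℝ) * volume.real (Dom d) :=
        mul_le_mul htime (integral_phi_sq_le k) hspace0 (htime0.trans htime)
    _ = (2 * T + 1) * volume.real (Dom d) * (1 + ksq k) ^ (-2 : ℝ) := by ring

theorem exists_eLpNorm_causalGreen_le (hd : d ≤ 3) {t T : ℝ} (ht : t ∈ Set.Icc 0 T) :
    ∃ C, ∀ x : Fin d → ℝ, eLpNorm (causalGreen t x) 2 (spaceTime d T) ≤ ENNReal.ofReal C := by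
  have hT : 0 ≤ T := ht.1.trans ht.2
  have hd2 : (d : ℝ) / 2 < 2 := by
    have : (d : ℝ) ≤ 3 := by exact_mod_cast hd
    linarith
  have hsum := (summable_one_add_ksq_rpow_neg hd2).mul_left ((2 * T + 1) * volume.real (Dom d))
  refine ⟨√(∑' k : Fin d → ℕ, (2 * T + 1) * volume.real (Dom d) * (1 + ksq k) ^ (-2 : ℝ)),
    fun x => eLpNorm_le_of_hasSum_of_orthogonal (memLp_greenMode t T x) (fun k l hkl => ?_)
      (fun s => ?_) (Eventually.of_forall fun z => hasSum_greenMode t x z)⟩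
  · rw [integral_greenMode_mul_greenMode, integral_phi_mul_phi_of_ne hkl, mul_zero, mul_zero]
  · refine (Finset.sum_le_sum fun k _ => integral_greenMode_sq_le ht x k).trans
      (hsum.sum_le_tsum s fun k _ => ?_)
    have := ksq_nonneg k
    positivity

theorem exists_eLpNorm_causalGreen_mul_le (hd : d ≤ 3) {t T : ℝ} (ht : t ∈ Set.Icc 0 T)
    {h : ℝ × (Fin d → ℝ) → ℝ} {B : ℝ} (hB : ∀ z, |h z| ≤ B) :
    ∃ C, ∀ x : Fin d → ℝ,
      eLpNorm (fun z => causalGreen t x z * h z) 2 (spaceTime d T) ≤ ENNReal.ofReal C := by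
  obtain ⟨C, hC⟩ := exists_eLpNorm_causalGreen_le hd ht
  have hB0 : 0 ≤ B := (abs_nonneg _).trans (hB 0)
  refine ⟨B * C, fun x => ?_⟩
  rw [ENNReal.ofReal_mul hB0]
  refine (eLpNorm_le_mul_eLpNorm_of_ae_le_mul (Eventually.of_forall fun z => ?_) 2).trans
    (mul_le_mul_right (hC x) _)
  rw [norm_mul, mul_comm]
  exact mul_le_mul_of_nonneg_right (hB z) (norm_nonneg _)

end GreenKernel

section SpaceTime

variable {d : ℕ} {T : ℝ}

theorem memL2TD_iff {v : ℝ → (Fin d → ℝ) → ℝ} :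
    MemL2TD T v ↔
      Measurable (Function.uncurry v) ∧ MemLp (Function.uncurry v) 2 (spaceTime d T) := by
  refine and_congr_right fun hv => ?_
  rw [memLp_two_iff_integrable_sq hv.aestronglyMeasurable, IntegrableOn, spaceTime,
    Measure.prod_restrict, ← Measure.volume_eq_prod]
  rfl

theorem integral_uncurry_mul_eq_integral_integral {v φ : ℝ → (Fin d → ℝ) → ℝ}
    (hv : MemL2TD T v) (hφ : MemL2TD T φ) :
    ∫ z, Function.uncurry v z * Function.uncurry φ z ∂spaceTime d T =
      ∫ t in Set.Icc 0 T, ∫ x in Dom d, v t x * φ t x :=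
  integral_prod _ ((memL2TD_iff.1 hv).2.integrable_mul (memL2TD_iff.1 hφ).2)

theorem tendsto_integral_sub_mul_zero {vseq : ℕ → ℝ → (Fin d → ℝ) → ℝ}
    {v : ℝ → (Fin d → ℝ) → ℝ} (hvseq : ∀ n, MemL2TD T (vseq n)) (hv : MemL2TD T v)
    (hweak : ∀ φ : ℝ → (Fin d → ℝ) → ℝ, MemL2TD T φ →
      Tendsto (fun n => ∫ t in Set.Icc (0 : ℝ) T, ∫ x in Dom d, vseq n t x * φ t x)
        atTop (nhds (∫ t in Set.Icc (0 : ℝ) T, ∫ x in Dom d, v t x * φ t x)))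
    {φ : ℝ × (Fin d → ℝ) → ℝ} (hφ : MemLp φ 2 (spaceTime d T)) :
    Tendsto (fun n => ∫ z, (Function.uncurry (vseq n) - Function.uncurry v) z * φ z
      ∂spaceTime d T) atTop (nhds 0) := by
  obtain ⟨ψ, hψ, hφψ⟩ := hφ.1
  have hψ2 : MemL2TD T (Function.curry ψ) :=
    memL2TD_iff.2 ⟨hψ.measurable, hφ.ae_eq hφψ⟩
  have hlim := (hweak _ hψ2).sub_const
    (∫ t in Set.Icc 0 T, ∫ x in Dom d, v t x * Function.curry ψ t x)
  rw [sub_self] at hlim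
  refine hlim.congr fun n => ?_
  have hpair : ∀ {w}, MemL2TD T w →
      Integrable (fun z => Function.uncurry w z * ψ z) (spaceTime d T) := fun hw =>
    (memL2TD_iff.1 hw).2.integrable_mul (memL2TD_iff.1 hψ2).2
  calc _ = ∫ z, Function.uncurry (vseq n) z * ψ z ∂spaceTime d T -
          ∫ z, Function.uncurry v z * ψ z ∂spaceTime d T :=
        (congr_arg₂ _ (integral_uncurry_mul_eq_integral_integral (hvseq n) hψ2)
          (integral_uncurry_mul_eq_integral_integral hv hψ2)).symm
    _ = ∫ z, (Function.uncurry (vseq n) - Function.uncurry v) z * ψ z ∂spaceTime d T := by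
        simp_rw [Pi.sub_apply, sub_mul]
        exact (integral_sub (hpair (hvseq n)) (hpair hv)).symm
    _ = _ := integral_congr_ae (hφψ.mono fun z hz => by simp only [hz])

theorem intervalIntegral_green_mul_eq_integral {t : ℝ} (ht : t ∈ Set.Icc 0 T) (x : Fin d → ℝ)
    (h w : ℝ → (Fin d → ℝ) → ℝ)
    (hint : Integrable (fun z => Function.uncurry w z *
      (causalGreen t x z * Function.uncurry h z)) (spaceTime d T)) :
    ∫ s in (0 : ℝ)..t, ∫ y in Dom d, green (t - s) x y * h s y * w s y =
      ∫ z, Function.uncurry w z * (causalGreen t x z * Function.uncurry h z) ∂spaceTime d T := by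
  rw [integral_prod _ hint, ← setIntegral_Icc_indicator_Iio ht]
  refine integral_congr_ae (Eventually.of_forall fun s => ?_)
  by_cases hs : s < t
  · simp [causalGreen, hs, mul_comm (w s _)]
  · simp [causalGreen, hs]

end SpaceTime

theorem weak_convergence_stochastic_convolution_general {d : ℕ} (hd : d ≤ 3) {T : ℝ}
    {h : ℝ → (Fin d → ℝ) → ℝ} (hhmeas : Measurable (Function.uncurry h))
    (hhbdd : ∃ Ch : ℝ, ∀ s x, |h s x| ≤ Ch) {p : ℝ} (hp : 0 < p)
    {vseq : ℕ → ℝ → (Fin d → ℝ) → ℝ} {v : ℝ → (Fin d → ℝ) → ℝ}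
    (hvseq : ∀ n, MemL2TD T (vseq n)) (hv : MemL2TD T v)
    (hweak : ∀ φ : ℝ → (Fin d → ℝ) → ℝ, MemL2TD T φ →
      Tendsto (fun n => ∫ t in Set.Icc (0 : ℝ) T, ∫ x in Dom d, vseq n t x * φ t x)
        atTop (nhds (∫ t in Set.Icc (0 : ℝ) T, ∫ x in Dom d, v t x * φ t x)))
    {t : ℝ} (ht : t ∈ Set.Icc 0 T) :
    Tendsto (fun n => LpNorm p fun x =>
        ∫ s in (0 : ℝ)..t, ∫ y in Dom d, green (t - s) x y * h s y * (vseq n s y - v s y))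
      atTop (nhds 0) := by
  obtain ⟨Ch, hCh⟩ := hhbdd
  obtain ⟨C, hC⟩ := exists_eLpNorm_causalGreen_mul_le hd ht
    (h := Function.uncurry h) fun z => hCh z.1 z.2
  have hK : Measurable (Function.uncurry fun x z => causalGreen t x z * Function.uncurry h z) :=
    (measurable_causalGreen t).mul (hhmeas.comp measurable_snd)
  have hw : ∀ n, MemLp (Function.uncurry (vseq n) - Function.uncurry v) 2 (spaceTime d T) :=
    fun n => (memL2TD_iff.1 (hvseq n)).2.sub (memL2TD_iff.1 hv).2
  have hconv : ∀ n x, ∫ s in (0 : ℝ)..t, ∫ y in Dom d,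
      green (t - s) x y * h s y * (vseq n s y - v s y) =
        ∫ z, (Function.uncurry (vseq n) - Function.uncurry v) z *
          (causalGreen t x z * Function.uncurry h z) ∂spaceTime d T := fun n x =>
    intervalIntegral_green_mul_eq_integral ht x h (fun s y => vseq n s y - v s y)
      ((hw n).integrable_mul
        ⟨hK.of_uncurry_left.aestronglyMeasurable, (hC x).trans_lt ENNReal.ofReal_lt_top⟩)
  have hpow := tendsto_integral_abs_integral_mul_rpow_zero (ν := volume.restrict (Dom d)) hp hK hC
    hw fun φ hφ => tendsto_integral_sub_mul_zero hvseq hv hweak hφ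
  have hroot := hpow.rpow_const (p := 1 / p) (Or.inr (by positivity))
  rw [Real.zero_rpow (one_div_pos.2 hp).ne'] at hroot
  simp_rw [LpNorm, hconv]
  exact hroot

/-- Convergence (4.8): if `vₙ ∈ H_N` converges weakly in `L²([0,T]×D)` to `v`, then for every
`t ∈ [0,T]` the `L^p(D)`-norm of `x ↦ ∫_0^t ∫_D G_{t-s}(x,y) h(s,y)(vₙ(s,y)-v(s,y)) dy ds`
tends to `0`. -/
theorem weak_convergence_stochastic_convolution (d : ℕ) (hd : d ∈ ({1, 2, 3} : Set ℕ))
    (T : ℝ) (hT : 0 < T) (h : ℝ → (Fin d → ℝ) → ℝ)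
    (hhmeas : Measurable (Function.uncurry h)) (hhbdd : ∃ Ch : ℝ, ∀ s x, |h s x| ≤ Ch)
    (p : ℝ) (hp : 1 ≤ p) (N : ℕ)
    (vseq : ℕ → ℝ → (Fin d → ℝ) → ℝ) (v : ℝ → (Fin d → ℝ) → ℝ)
    (hvseq : ∀ n, MemHN T N (vseq n)) (hv : MemL2TD T v)
    (hweak : ∀ φ : ℝ → (Fin d → ℝ) → ℝ, MemL2TD T φ →
      Filter.Tendsto
        (fun n => ∫ t in Set.Icc (0 : ℝ) T, ∫ x in Dom d, vseq n t x * φ t x)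
        Filter.atTop (nhds (∫ t in Set.Icc (0 : ℝ) T, ∫ x in Dom d, v t x * φ t x))) :
    ∀ t ∈ Set.Icc (0 : ℝ) T,
      Filter.Tendsto
        (fun n => LpNorm p (fun x =>
          ∫ s in (0 : ℝ)..t, ∫ y in Dom d, green (t - s) x y * h s y * (vseq n s y - v s y)))
        Filter.atTop (nhds 0) :=
  fun _ ht => weak_convergence_stochastic_convolution_general
    (by rcases hd with rfl | rfl | rfl <;> norm_num) hhmeas hhbdd (zero_lt_one.trans_le hp)
    (fun n => (hvseq n).1) hv hweak ht
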